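/- Let 𝓓 = (Ω, 𝓑) be a β(i) design with parameter (v, k, d). If i ≥ 2, then S₁ is not empty, i.e. there exists a (d+2(i−2))-element subset X of Ω with |X ∩ B| ≤ d+i−2 for every block B ∈ 𝓑. -/

import Mathlib

open Finset

variable {α : Type*} [Fintype α] [DecidableEq α]

/-- `𝓑` is a design on the finite type `α` of cardinality `v`, with block size `k` and
maximal pairwise block intersection size `d`. -/
def IsDesign (𝓑 : Finset (Finset α)) (v k d : ℕ) : Prop :=
  Fintype.card α = v ∧ 2 ≤ 𝓑.card ∧ d < k ∧ k < v ∧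
  (∀ B ∈ 𝓑, B.card = k) ∧
  (∀ B ∈ 𝓑, ∀ C ∈ 𝓑, B ≠ C → (B ∩ C).card ≤ d) ∧
  (∃ B ∈ 𝓑, ∃ C ∈ 𝓑, B ≠ C ∧ (B ∩ C).card = d)

/-- `𝓑` is a `β(i)` design with parameters `(v, k, d)`: a design such that
`1 ≤ i ≤ (v - d + 1)/2` and every `(d + 2i - 1)`-element subset `X` of `Ω` admits a
unique block `B` with `|X ∩ B| ≥ d + i`. -/
def IsBetaDesign (𝓑 : Finset (Finset α)) (v k d i : ℕ) : Prop :=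
  IsDesign 𝓑 v k d ∧ 1 ≤ i ∧ 2 * i ≤ v - d + 1 ∧
  ∀ X : Finset α, X.card = d + 2 * i - 1 →
    ∃! B, B ∈ 𝓑 ∧ d + i ≤ (X ∩ B).card

/-!
Take two blocks `B ≠ C`. The required set `X` consists of `d + j` points of `B` and `j` points of
`C \ B`, where `j = i - 2`. The block `B` meets only the first part of `X`, while any other block
contains at most `d` points of the first part and at most `j` of the second. The choice is possible
because all blocks have the same size, and the `β(i)` property yields one of size at least `d + i`.
-/

section Family

variable {Ω : Type*} [DecidableEq Ω] {𝓑 : Set (Finset Ω)} {d j : ℕ}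

theorem card_union_inter_le_add {B P Q A : Finset Ω} (hPB : P ⊆ B) (hBA : #(B ∩ A) ≤ d)
    (hQ : #Q ≤ j) : #((P ∪ Q) ∩ A) ≤ d + j := by
  rw [union_inter_distrib_right]
  calc #(P ∩ A ∪ Q ∩ A)
      ≤ #(P ∩ A) + #(Q ∩ A) := card_union_le _ _
    _ ≤ d + j := add_le_add ((card_le_card (inter_subset_inter_right hPB)).trans hBA)
        ((card_le_card inter_subset_left).trans hQ)

theorem le_card_sdiff_of_card_inter_le {B C : Finset Ω} (hBC : #(B ∩ C) ≤ d)
    (hC : d + j ≤ #C) : j ≤ #(C \ B) := by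
  rw [card_sdiff]
  omega

theorem S1_nonempty_general (h𝓑 : 𝓑.Nontrivial) (hcard : ∀ B ∈ 𝓑, d + j ≤ #B)
    (hinter : 𝓑.Pairwise fun B C ↦ #(B ∩ C) ≤ d) :
    ∃ X : Finset Ω, #X = d + 2 * j ∧ ∀ B ∈ 𝓑, #(X ∩ B) ≤ d + j := by
  obtain ⟨B, hB, C, hC, hBC⟩ := h𝓑
  obtain ⟨P, hPB, hP⟩ := exists_subset_card_eq (hcard B hB)
  obtain ⟨Q, hQC, hQ⟩ := exists_subset_card_eq
    (le_card_sdiff_of_card_inter_le (hinter hB hC hBC) (hcard C hC))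
  have hQB : Disjoint Q B := disjoint_of_subset_left hQC sdiff_disjoint
  have hPQ : Disjoint P Q := (disjoint_of_subset_right hPB hQB).symm
  refine ⟨P ∪ Q, by rw [card_union_of_disjoint hPQ, hP, hQ]; ring, fun A hA ↦ ?_⟩
  obtain rfl | hBA := eq_or_ne B A
  · rw [union_inter_distrib_right, disjoint_iff_inter_eq_empty.mp hQB, union_empty, ← hP]
    exact card_le_card inter_subset_left
  · exact card_union_inter_le_add hPB (hinter hB hA hBA) hQ.le

end Family

section Design

variable {𝓑 : Finset (Finset α)} {v k d i : ℕ}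

theorem IsDesign.nontrivial (h : IsDesign 𝓑 v k d) :
    (𝓑 : Set (Finset α)).Nontrivial :=
  one_lt_card_iff_nontrivial.mp h.2.1

theorem IsDesign.card_block (h : IsDesign 𝓑 v k d) {B : Finset α} (hB : B ∈ 𝓑) : #B = k :=
  h.2.2.2.2.1 B hB

theorem IsDesign.pairwise_card_inter_le (h : IsDesign 𝓑 v k d) :
    (𝓑 : Set (Finset α)).Pairwise fun B C ↦ #(B ∩ C) ≤ d :=
  fun B hB C hC ↦ h.2.2.2.2.2.1 B hB C hC

theorem IsBetaDesign.add_le_card_block (h : IsBetaDesign 𝓑 v k d i) {B : Finset α}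
    (hB : B ∈ 𝓑) : d + i ≤ #B := by
  obtain ⟨hD, -, hi, hX⟩ := h
  have ⟨hv, _, hdk, hkv, _⟩ := hD
  obtain ⟨X, -, hXcard⟩ : ∃ X ⊆ (univ : Finset α), #X = d + 2 * i - 1 :=
    exists_subset_card_eq (by rw [card_univ]; omega)
  obtain ⟨C, ⟨hC, hXC⟩, -⟩ := hX X hXcard
  calc d + i ≤ #(X ∩ C) := hXC
    _ ≤ #C := card_le_card inter_subset_right
    _ = #B := (hD.card_block hC).trans (hD.card_block hB).symm

end Design

/-- **Lemma 2.1 (1).** If `𝓑` is a `β(i)` design with parameter `(v, k, d)` and `i ≥ 2`,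
then `S₁` is nonempty: there is a `(d + 2(i-2))`-element subset `X` of `Ω` with
`|X ∩ B| ≤ d + i - 2` for every block `B ∈ 𝓑`. -/
theorem S1_nonempty (𝓑 : Finset (Finset α)) (v k d i : ℕ)
    (hB : IsBetaDesign 𝓑 v k d i) (hi : 2 ≤ i) :
    ∃ X : Finset α, X.card = d + 2 * (i - 2) ∧ ∀ B ∈ 𝓑, (X ∩ B).card ≤ d + i - 2 := by
  rw [Nat.add_sub_assoc hi]
  exact S1_nonempty_general hB.1.nontrivial
    (fun _ h ↦ le_trans (by omega) (hB.add_le_card_block h)) hB.1.pairwise_card_inter_le
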